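/- For any virtual knot diagram K, the odd writhe satisfies J(K*) = -J(K), where K* is the mirror image of K; consequently, if J(K) is nonzero then K is not equivalent to any classical knot and K is not equivalent to its mirror image (K is chiral). -/

import Mathlib

/-!
# Virtual knots and links via signed Gauss codes

A virtual knot or link diagram, up to the virtual Reidemeister moves and the
detour move, is faithfully encoded by its signed oriented Gauss code: the
cyclic sequence, along each component, of passages through the classical
crossings, each passage recording the crossing's name, whether the strand
passes over or under, and the crossing sign.  Virtual crossings and the
detour move are invisible in this encoding, so oriented virtual isotopy is
generated by the oriented classical Reidemeister moves together with
re-encoding moves (rotation of the base point, permutation of the components,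
renaming of the crossings).
-/

open LaurentPolynomial

/-- A passage of a strand through a classical crossing of a virtual diagram. -/
structure Passage where
  id : ℕ
  isOver : Bool
  sign : ℤ
  deriving DecidableEq, Repr

instance : Inhabited Passage := ⟨⟨0, false, 0⟩⟩

/-- The affine-label increment when the strand passes through a crossing:
crossing to the left increases the label by one, crossing to the right
decreases it by one.  For a positive crossing the over-strand crosses to the
right and the under-strand to the left; for a negative crossing it is the
other way around.  Labels are unchanged at virtual crossings. -/
def Passage.inc (p : Passage) : ℤ := if p.isOver then -p.sign else p.sign

/-- The Gauss code of one oriented circle component. -/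
abbrev KCode := List Passage

/-- The list of classical crossing names appearing in a code. -/
def crossIds (a : KCode) : List ℕ := (a.map Passage.id).dedup

/-- The number of classical crossings. -/
def numCross (a : KCode) : ℕ := (crossIds a).length

/-- A valid knot code: every crossing has sign `±1` and occurs exactly once as
an over-passage and exactly once as an under-passage, with consistent sign. -/
def ValidK (a : KCode) : Prop :=
  ∀ p ∈ a, (p.sign = 1 ∨ p.sign = -1) ∧
    (a.filter (fun q => q.id == p.id && q.isOver)).length = 1 ∧
    (a.filter (fun q => q.id == p.id && !q.isOver)).length = 1 ∧
    (∀ q ∈ a, q.id = p.id → q.sign = p.sign)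

/-- The canonical affine label of the arc entering the `k`-th passage
(base label `0` on the arc entering the `0`-th passage). -/
def labelAt (a : KCode) (k : ℕ) : ℤ := ((a.take k).map Passage.inc).sum

/-- Position of the over-passage of crossing `i`. -/
def overPos (a : KCode) (i : ℕ) : ℕ := a.findIdx (fun p => p.id == i && p.isOver)

/-- Position of the under-passage of crossing `i`. -/
def underPos (a : KCode) (i : ℕ) : ℕ := a.findIdx (fun p => p.id == i && !p.isOver)

/-- The sign of crossing `i`. -/
def sgn (a : KCode) (i : ℕ) : ℤ :=
  ((a.find? (fun p => p.id == i)).map Passage.sign).getD 0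

/-- The weight `W_K(c)` of a crossing `c`: with incoming labels `a` (left) and
`b` (right) it is `W₊ = a - b - 1` if `sgn c = 1` and `W₋ = b - a + 1` if
`sgn c = -1`; equivalently it is
(label entering the over-passage) − (label entering the under-passage) − sign. -/
def wt (a : KCode) (i : ℕ) : ℤ :=
  labelAt a (overPos a i) - labelAt a (underPos a i) - sgn a i

/-- The affine index polynomial `P_K(t) = ∑_c sgn(c) (t^{W_K(c)} - 1)`. -/
noncomputable def affP (a : KCode) : LaurentPolynomial ℤ :=
  ((crossIds a).map (fun i => (C (sgn a i)) * (T (wt a i) - 1))).sum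

/-- The signed crossing count `wr_n(K) = ∑_{c : W_K(c) = n} sgn(c)`. -/
def wrn (a : KCode) (n : ℤ) : ℤ :=
  (((crossIds a).filter (fun i => wt a i == n)).map (sgn a)).sum

/-- A crossing is odd when it flanks an odd number of symbols of the Gauss
code, i.e. when the positions of its two passages differ by an even number. -/
def OddCross (a : KCode) (i : ℕ) : Bool := (overPos a i + underPos a i) % 2 == 0

/-- The odd writhe `J(K)`: the sum of the signs of the odd crossings. -/
def oddWrithe (a : KCode) : ℤ := (((crossIds a).filter (OddCross a)).map (sgn a)).sum

/-- The reverse `K̄` of `K`: the same diagram with reversed orientation. -/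
def reverseK (a : KCode) : KCode := a.reverse

/-- The (flat) mirror image `K*`: every classical crossing is switched, which
exchanges over- and under-passages and reverses all crossing signs. -/
def switchAll (a : KCode) : KCode := a.map (fun p => ⟨p.id, !p.isOver, -p.sign⟩)

/-- The vertical mirror image `K^!`: reflect the diagram in a plane
perpendicular to the plane of the diagram (which keeps the over/under data
and reverses all crossing signs) and reverse the orientation. -/
def vmirror (a : KCode) : KCode := (a.map (fun p => ⟨p.id, p.isOver, -p.sign⟩)).reverse

/-- Rename the crossings of a code by `f`. -/
def relabel (f : ℕ → ℕ) (a : KCode) : KCode := a.map (fun p => { p with id := f p.id })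

/-! ## Links -/

/-- A link code: a list of circle components. -/
abbrev LCode := List KCode

/-- Validity of a link code: the crossing data is globally consistent. -/
def ValidLink (L : LCode) : Prop := ValidK L.flatten

def crossIdsL (L : LCode) : List ℕ := crossIds L.flatten

def sgnL (L : LCode) (i : ℕ) : ℤ := sgn L.flatten i

/-- An affine (integer) labeling of the arcs of a link diagram:
`lab c k` is the label of the arc entering the `k`-th passage of the `c`-th
component; at each classical crossing with left incoming label `a` and right
incoming label `b`, the left outgoing label is `b+1` and the right outgoing
label is `a-1`, i.e. passing through a passage changes the label by its
increment.  Labels are unchanged at virtual crossings. -/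
def IsAffineLabeling (L : LCode) (lab : ℕ → ℕ → ℤ) : Prop :=
  ∀ c, c < L.length → ∀ k, k < (L.getD c []).length →
    lab c ((k + 1) % (L.getD c []).length) =
      lab c k + ((L.getD c []).getD k default).inc

/-- Locations `(component, position)` of the passages of crossing `i` that are
over-passages (`sel = true`) resp. under-passages (`sel = false`). -/
def locs (L : LCode) (i : ℕ) (sel : Bool) : List (ℕ × ℕ) :=
  (List.range L.length).flatMap (fun c =>
    (List.range (L.getD c []).length).filterMap (fun k =>
      if ((L.getD c []).getD k default).id = i ∧ ((L.getD c []).getD k default).isOver = sel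
      then some (c, k) else none))

/-- The weight of crossing `i` of a link diagram with affine labeling `lab`. -/
def wtL (L : LCode) (lab : ℕ → ℕ → ℤ) (i : ℕ) : ℤ :=
  lab ((locs L i true).headD (0, 0)).1 ((locs L i true).headD (0, 0)).2
    - lab ((locs L i false).headD (0, 0)).1 ((locs L i false).headD (0, 0)).2
    - sgnL L i

/-- The affine index polynomial of an affinely labeled link diagram. -/
noncomputable def affPL (L : LCode) (lab : ℕ → ℕ → ℤ) : LaurentPolynomial ℤ :=
  ((crossIdsL L).map (fun i => (C (sgnL L i)) * (T (wtL L lab i) - 1))).sum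

/-- The passages of component `c` whose partner passage lies on a different
component. -/
def crossPassages (L : LCode) (c : ℕ) : KCode :=
  (L.getD c []).filter (fun p =>
    ((L.getD c []).filter (fun q => q.id == p.id)).length == 1)

/-- The algebraic intersection number of component `c` with the union of the
other components: the signed count, in the plane, of the crossings of
component `c` with the other components (the strand crossing to the left
counts `+1`, to the right `−1`). -/
def algInt (L : LCode) (c : ℕ) : ℤ := ((crossPassages L c).map Passage.inc).sum

/-- A multi-component diagram is compatible when every component has algebraic
intersection number zero with the union of the other components. -/
def Compatible (L : LCode) : Prop := ∀ c < L.length, algInt L c = 0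

/-! ## Virtual isotopy

Link codes whose components carry an inert tracking label (a natural number);
the labels are preserved by isotopy and are used to follow components through
the births, deaths and saddles of a cobordism. -/

abbrev LLC := List (ℕ × KCode)

def plainL (L : LLC) : LCode := L.map Prod.snd

def idsOf (L : LLC) : List ℕ := crossIdsL (plainL L)

def pieceIds (L : LLC) : List ℕ := L.map Prod.fst

/-- `ReplC c c' segs segs'`: the circle `c'` is obtained from the circle `c`
by replacing, scanning from left to right, an initial batch of the listed
segments (`u` is replaced by `v` for each pair `(u, v)`), leaving `segs'`. -/
inductive ReplC : KCode → KCode → List (KCode × KCode) → List (KCode × KCode) → Prop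
  | nil (c : KCode) (segs : List (KCode × KCode)) : ReplC c c segs segs
  | cons {y y' : KCode} {segs segs' : List (KCode × KCode)} (x u v : KCode) :
      ReplC y y' segs segs' →
      ReplC (x ++ u ++ y) (x ++ v ++ y') ((u, v) :: segs) segs'

/-- `ReplL L L' segs`: the labeled link `L'` is obtained from `L` by
simultaneously performing all the listed segment replacements, in scanning
order. -/
inductive ReplL : LLC → LLC → List (KCode × KCode) → Prop
  | nil : ReplL [] [] []
  | cons {c c' : KCode} {L L' : LLC} {segs segs' : List (KCode × KCode)} (k : ℕ) :
      ReplC c c' segs segs' → ReplL L L' segs' → ReplL ((k, c) :: L) ((k, c') :: L') segs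

/-- `if b then [p, q] else [q, p]`. -/
def pairOf (b : Bool) (p q : Passage) : KCode := if b then [p, q] else [q, p]

/-- A generating move of oriented virtual isotopy on Gauss codes.  The
constructors `perm`, `rotate`, `rename` are inessential re-encodings; in
particular the virtual Reidemeister moves and the detour move leave the Gauss
code unchanged.  The constructors `r1`, `r2`, `r3` are the oriented classical
Reidemeister moves (`r1` and `r2` are stated as insertions; the inverse moves
are recovered by taking the symmetric closure). -/
inductive MoveStep : LLC → LLC → Prop
  /-- re-ordering the components -/
  | perm {L L' : LLC} (h : L.Perm L') : MoveStep L L'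
  /-- moving the base point of a component -/
  | rotate (k : ℕ) (x y : KCode) (L : LLC) :
      MoveStep ((k, x ++ y) :: L) ((k, y ++ x) :: L)
  /-- renaming the crossings injectively -/
  | rename {L : LLC} (f : ℕ → ℕ) (hf : Function.Injective f) :
      MoveStep L (L.map (fun c => (c.1, relabel f c.2)))
  /-- first Reidemeister move: insertion of a kink with a fresh crossing `i` -/
  | r1 {L L' : LLC} (i : ℕ) (o : Bool) (s : ℤ) (hs : s = 1 ∨ s = -1) (hi : i ∉ idsOf L)
      (h : ReplL L L' [([], [⟨i, o, s⟩, ⟨i, !o, s⟩])]) : MoveStep L L'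
  /-- second Reidemeister move: one strand slides across another, creating two
  fresh crossings `i, j` with opposite signs; `o` records whether the first
  strand passes over, `ord` the relative orientation of the strands. -/
  | r2 {L L' : LLC} (i j : ℕ) (o ord : Bool) (s : ℤ) (hs : s = 1 ∨ s = -1)
      (hij : i ≠ j) (hi : i ∉ idsOf L) (hj : j ∉ idsOf L)
      (h : ReplL L L'
        [([], [⟨i, o, s⟩, ⟨j, o, -s⟩]),
         ([], if ord then [⟨j, !o, -s⟩, ⟨i, !o, s⟩] else [⟨i, !o, s⟩, ⟨j, !o, -s⟩])]) :
      MoveStep L L'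
  /-- third Reidemeister move: a strand slides across a crossing.  Crossing
  `i` joins the top and the middle strand, `j` the top and the bottom strand,
  `k` the middle and the bottom strand; on each of the three strands the
  corresponding pair of adjacent passages is transposed.  The product of the
  three signs is `+1`, and the orders of the pairs along the strands are
  correlated with the signs as dictated by the orientations of the three
  strands (`t` records the order along the top strand). -/
  | r3 {L L' : LLC} (i j k : ℕ) (si sj sk : ℤ)
      (hsi : si = 1 ∨ si = -1) (hsj : sj = 1 ∨ sj = -1) (hsk : sk = 1 ∨ sk = -1)
      (hprod : si * sj * sk = 1)
      (hij : i ≠ j) (hik : i ≠ k) (hjk : j ≠ k)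
      (t : Bool) (segs : List (KCode × KCode))
      (hsegs : segs.Perm
        [(pairOf t ⟨i, true, si⟩ ⟨j, true, sj⟩,
          pairOf (!t) ⟨i, true, si⟩ ⟨j, true, sj⟩),
         (pairOf (t == (sj * sk == 1)) ⟨i, false, si⟩ ⟨k, true, sk⟩,
          pairOf (!(t == (sj * sk == 1))) ⟨i, false, si⟩ ⟨k, true, sk⟩),
         (pairOf (t == (si * sk == 1)) ⟨j, false, sj⟩ ⟨k, false, sk⟩,
          pairOf (!(t == (si * sk == 1))) ⟨j, false, sj⟩ ⟨k, false, sk⟩)])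
      (h : ReplL L L' segs) : MoveStep L L'

/-- Oriented virtual isotopy: the equivalence relation generated by the
classical Reidemeister moves, the virtual Reidemeister moves and the detour
move (the latter two being invisible on Gauss codes). -/
def Isotopic : LLC → LLC → Prop := Relation.EqvGen MoveStep

/-! ## Cobordism

A cobordism is a sequence of isotopies, births and deaths of unknotted
circles, and oriented saddle moves.  The schema of a cobordism is the abstract
surface it generates; we track its connected pieces through the component
labels, the genus of each piece, and the total genus of the pieces that have
been closed off, so that the genus of the schema is well defined. -/

/-- A state of a cobordism in progress: the current labeled link diagram (the
label of a circle names the surface piece it bounds), the genus of each piece,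
and the accumulated genus of closed-off pieces. -/
structure CobState where
  link : LLC
  genus : ℕ → ℕ
  closed : ℕ

/-- One step of a virtual cobordism. -/
inductive CobStep : CobState → CobState → Prop
  /-- a virtual isotopy move -/
  | isot {L L' : LLC} (g : ℕ → ℕ) (c : ℕ) (h : MoveStep L L') :
      CobStep ⟨L, g, c⟩ ⟨L', g, c⟩
  /-- birth of an unknotted circle, starting a fresh piece of genus `0` -/
  | birth (k : ℕ) (L : LLC) (g : ℕ → ℕ) (c : ℕ) (hk : k ∉ pieceIds L) :
      CobStep ⟨L, g, c⟩ ⟨(k, []) :: L, Function.update g k 0, c⟩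
  /-- death of an unknotted circle whose piece still has other boundary -/
  | death_keep (k : ℕ) (L : LLC) (g : ℕ → ℕ) (c : ℕ) (hk : k ∈ pieceIds L) :
      CobStep ⟨(k, []) :: L, g, c⟩ ⟨L, g, c⟩
  /-- death of an unknotted circle closing off its piece -/
  | death_close (k : ℕ) (L : LLC) (g : ℕ → ℕ) (c : ℕ) (hk : k ∉ pieceIds L) :
      CobStep ⟨(k, []) :: L, g, c⟩ ⟨L, g, c + g k⟩
  /-- oriented saddle splitting one circle into two (genus unchanged) -/
  | saddle_split (k : ℕ) (x y : KCode) (L : LLC) (g : ℕ → ℕ) (c : ℕ) :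
      CobStep ⟨(k, x ++ y) :: L, g, c⟩ ⟨(k, x) :: (k, y) :: L, g, c⟩
  /-- oriented saddle merging two boundary circles of the same piece
  (the genus of the piece increases by one) -/
  | saddle_merge_same (k : ℕ) (x y : KCode) (L : LLC) (g : ℕ → ℕ) (c : ℕ) :
      CobStep ⟨(k, x) :: (k, y) :: L, g, c⟩
        ⟨(k, x ++ y) :: L, Function.update g k (g k + 1), c⟩
  /-- oriented saddle merging boundary circles of two different pieces
  (the pieces merge and their genera add) -/
  | saddle_merge_diff (j k : ℕ) (x y : KCode) (L : LLC) (g : ℕ → ℕ) (c : ℕ)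
      (hjk : j ≠ k) :
      CobStep ⟨(j, x) :: (k, y) :: L, g, c⟩
        ⟨(j, x ++ y) :: (L.map fun p => if p.1 = k then (j, p.2) else p),
          Function.update (Function.update g j (g j + g k)) k 0, c⟩

/-- A virtual cobordism: a finite sequence of cobordism steps. -/
def Cob : CobState → CobState → Prop := Relation.ReflTransGen CobStep

/-- `L` and `L'` cobound a virtual cobordism (of some genus). -/
def Cobordant (L L' : LLC) : Prop :=
  ∃ g' c', Cob ⟨L, fun _ => 0, 0⟩ ⟨L', g', c'⟩

/-- The knot `a` bounds a virtual surface schema of genus `G`: there is a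
virtual cobordism from `a` to the empty link, and `G` is the total genus of
the pieces of its schema. -/
def BoundsGenus (a : KCode) (G : ℕ) : Prop :=
  ∃ g' : ℕ → ℕ, Cob ⟨[(0, a)], fun _ => 0, 0⟩ ⟨[], g', G⟩

/-! ## Concordance

A genus-zero cobordism (concordance) is one in which every critical point is
paired: each birth is paired with a canceling saddle and each death with a
canceling saddle.  An elementary concordance is a birth followed (after
isotopy) by a saddle amalgamating the born circle, or a saddle splitting off a
circle that (after isotopy) dies. -/

/-- One step of a concordance. -/
inductive ConcStep : LLC → LLC → Prop
  /-- a virtual isotopy -/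
  | isot {L L' : LLC} (h : Isotopic L L') : ConcStep L L'
  /-- elementary concordance: birth of an unknotted circle (tracked by the
  fresh label `k`), isotopy, then an oriented saddle amalgamating the born
  circle with another component -/
  | birth_saddle {L rest : LLC} (j k : ℕ) (x y : KCode)
      (hk : k ∉ pieceIds L)
      (h : Isotopic ((k, []) :: L) ((j, x) :: (k, y) :: rest)) :
      ConcStep L ((j, x ++ y) :: rest)
  /-- elementary concordance: an oriented saddle splitting off a circle
  (tracked by the fresh label `k`) which after isotopy is an unknotted,
  unlinked circle and dies -/
  | saddle_death {M rest : LLC} (j k : ℕ) (x y : KCode)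
      (hk : k ∉ pieceIds ((j, x ++ y) :: M))
      (h : Isotopic ((j, x) :: (k, y) :: M) ((k, []) :: rest)) :
      ConcStep ((j, x ++ y) :: M) rest

/-- Virtual concordance: genus-zero virtual cobordism. -/
def Concordant : LLC → LLC → Prop := Relation.EqvGen ConcStep

/-- Virtual concordance of knots. -/
def ConcordantK (a b : KCode) : Prop := Concordant [(0, a)] [(0, b)]

/-- The unknot: a circle with no classical crossings. -/
def unknotCode : KCode := []

/-- A virtual knot is (virtually) slice when it is virtually concordant to
the unknot. -/
def SliceK (a : KCode) : Prop := ConcordantK a unknotCode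

/-! ## Seifert circles and faces -/

/-- The position of the other passage of the crossing visited at position `k`. -/
def partnerIdx (a : KCode) (k : ℕ) : ℕ :=
  ((List.range a.length).filter
    (fun j => j != k && (a.getD j default).id == (a.getD k default).id)).headD 0

/-- Traversal of the diagram obtained by the oriented smoothing of every
classical crossing: from the arc entering passage `k+1` one exits along the
arc leaving the partner passage. -/
def seifNext (a : KCode) (k : ℕ) : ℕ := partnerIdx a ((k + 1) % a.length)

/-- A canonical representative of the Seifert circle through arc `k`. -/
def seifRep (a : KCode) (k : ℕ) : ℕ :=
  ((List.range a.length).map (fun t => (seifNext a)^[t] k)).foldr min k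

/-- The number of (virtual) Seifert circles: the number of cycles of the
oriented smoothing of all classical crossings.  A crossingless circle is a
single Seifert circle. -/
def seifertCount (a : KCode) : ℕ :=
  if a.length = 0 then 1 else ((List.range a.length).map (seifRep a)).dedup.length

/-- The counterclockwise-next edge-end around a crossing.  An edge-end is a
pair (position, isIn): the head (`isIn = true`) or the tail (`isIn = false`)
of an arc at the passage at that position. -/
def nextEnd (a : KCode) (e : ℕ × Bool) : ℕ × Bool :=
  let p := a.getD e.1 default
  (partnerIdx a e.1, if p.isOver == (p.sign == 1) then e.2 else !e.2)

/-- The edge-end at which a directed arc (a dart) arrives. -/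
def headEnd (a : KCode) (d : ℕ × Bool) : ℕ × Bool :=
  if d.2 then ((d.1 + 1) % a.length, true) else (d.1, false)

/-- The dart leaving along a given edge-end. -/
def dartFrom (a : KCode) (e : ℕ × Bool) : ℕ × Bool :=
  if e.2 then ((e.1 + a.length - 1) % a.length, false) else (e.1, true)

/-- The face-tracing successor of a dart. -/
def faceNext (a : KCode) (d : ℕ × Bool) : ℕ × Bool :=
  dartFrom a (nextEnd a (headEnd a d))

def encDart (d : ℕ × Bool) : ℕ := 2 * d.1 + (if d.2 then 1 else 0)

/-- A canonical representative of the face through a given dart. -/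
def faceRep (a : KCode) (d : ℕ × Bool) : ℕ :=
  ((List.range (2 * a.length)).map (fun t => encDart ((faceNext a)^[t] d))).foldr
    min (encDart d)

/-- The number of faces of the abstract (ribbon) diagram of a code. -/
def numFaces (a : KCode) : ℕ :=
  (((List.range a.length).flatMap (fun k => [(k, true), (k, false)])).map
    (faceRep a)).dedup.length

/-- A knot code is classical when its underlying abstract diagram is planar,
i.e. (by Euler's formula) when it has `n + 2` faces, `n` being the number of
crossings.  Classical knot diagrams are exactly the virtual knot diagrams
having a realization with no virtual crossings. -/
def IsClassical (a : KCode) : Prop := a = [] ∨ numFaces a = numCross a + 2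

/-! ## Flat diagrams -/

/-- A passage of a flat (no over/under information) virtual knot diagram:
`left = true` when the other strand crosses to the left, so that the affine
label increases by one. -/
structure FlatPassage where
  id : ℕ
  left : Bool
  deriving DecidableEq, Repr

instance : Inhabited FlatPassage := ⟨⟨0, false⟩⟩

/-- The label increment at a flat passage. -/
def FlatPassage.inc (p : FlatPassage) : ℤ := if p.left then 1 else -1

/-- A valid flat knot code: each crossing is traversed exactly twice, once
with increment `+1` and once with increment `-1`. -/
def ValidFlat (a : List FlatPassage) : Prop :=
  ∀ p ∈ a, (a.filter (fun q => q.id == p.id && q.left)).length = 1 ∧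
    (a.filter (fun q => q.id == p.id && !q.left)).length = 1

/-- An affine labeling of a flat knot diagram: `lab k` is the label of the arc
entering the `k`-th passage, and passing a crossing changes the label by the
increment of the passage. -/
def IsFlatLabeling (a : List FlatPassage) (lab : ℕ → ℤ) : Prop :=
  ∀ k, k < a.length → lab ((k + 1) % a.length) = lab k + (a.getD k default).inc

/-!
Passing to the mirror image swaps the two passages of each crossing and negates its sign, so it
preserves the odd crossings and negates the odd writhe.

The odd writhe depends only on the multiset of passages tagged by the parity of their position. A
rotation shifts the tags of all passages together, or of none. A Reidemeister move inserts or
transposes segments of even length, so it does not alter the tags of the other passages: the first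
move inserts an even crossing, the second two crossings of the same parity and opposite signs, and
the third shifts the tags of both passages of each of its three crossings. Hence the odd writhe is
invariant under isotopy.

For a planar code with `n` crossings, Euler's formula gives `n + 2` faces, and counting shows that
every mod 2 cycle of arcs is the coboundary of a face 2-colouring. Apply this to one of the two
loops at a crossing and walk along the other: the colour changes exactly where the loops meet, so
they meet an even number of times and the crossing is even. Hence the odd writhe of a classical
code is zero.
-/

/-! ### Valid codes -/

/-- The passage at position `k` of a code, a junk value if `k` is out of range. -/
def passageAt (a : KCode) (k : ℕ) : Passage := a.getD k default

theorem passageAt_mem {a : KCode} {k : ℕ} (hk : k < a.length) : passageAt a k ∈ a := by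
  rw [passageAt, List.getD_eq_getElem _ _ hk]
  exact List.getElem_mem hk

theorem map_passageAt_range (a : KCode) : (List.range a.length).map (passageAt a) = a :=
  List.ext_getElem (by simp) fun k _ hk => by
    simp [passageAt, hk]

theorem mem_crossIds {a : KCode} {i : ℕ} : i ∈ crossIds a ↔ ∃ p ∈ a, p.id = i := by
  simp [crossIds]

theorem passageAt_id_mem_crossIds {a : KCode} {k : ℕ} (hk : k < a.length) :
    (passageAt a k).id ∈ crossIds a :=
  mem_crossIds.2 ⟨_, passageAt_mem hk, rfl⟩

theorem length_filter_eq_card (a : KCode) (P : Passage → Bool) :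
    (a.filter P).length = ((Finset.range a.length).filter (P <| passageAt a ·)).card := by
  conv_lhs => rw [← map_passageAt_range a, List.filter_map, List.length_map]
  exact congrArg List.length (List.filter_congr fun k _ => by simp)

theorem findIdx_spec {a : KCode} {P : Passage → Bool} (h : ∃ k < a.length, P (passageAt a k)) :
    a.findIdx P < a.length ∧ P (passageAt a (a.findIdx P)) := by
  obtain ⟨k, hk, hPk⟩ := h
  have hlt : a.findIdx P < a.length :=
    List.findIdx_lt_length_of_exists ⟨_, passageAt_mem hk, hPk⟩
  exact ⟨hlt, by simpa [passageAt, hlt] using List.findIdx_getElem (w := hlt)⟩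

namespace ValidK

variable {a : KCode} {i j k : ℕ}

theorem existsUnique_pos (ha : ValidK a) (hi : i ∈ crossIds a) (o : Bool) :
    ∃! k, k < a.length ∧ (passageAt a k).id = i ∧ (passageAt a k).isOver = o := by
  obtain ⟨p, hp, rfl⟩ := mem_crossIds.1 hi
  obtain ⟨-, hover, hunder, -⟩ := ha p hp
  have hcard : ((Finset.range a.length).filter
      fun k => (passageAt a k).id = p.id ∧ (passageAt a k).isOver = o).card = 1 := by
    cases o
    · simpa [length_filter_eq_card] using hunder
    · simpa [length_filter_eq_card] using hover
  simpa [and_assoc] using Finset.card_eq_one_iff_existsUnique.1 hcard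

theorem eq_of_id_isOver (ha : ValidK a) (hj : j < a.length) (hk : k < a.length)
    (hid : (passageAt a j).id = (passageAt a k).id)
    (hover : (passageAt a j).isOver = (passageAt a k).isOver) : j = k :=
  (ha.existsUnique_pos (passageAt_id_mem_crossIds hk) _).unique ⟨hj, hid, hover⟩ ⟨hk, rfl, rfl⟩

theorem sign_eq (ha : ValidK a) (hj : j < a.length) (hk : k < a.length)
    (hid : (passageAt a j).id = (passageAt a k).id) :
    (passageAt a j).sign = (passageAt a k).sign :=
  (ha _ (passageAt_mem hk)).2.2.2 _ (passageAt_mem hj) hid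

theorem overPos_spec (ha : ValidK a) (hi : i ∈ crossIds a) :
    overPos a i < a.length ∧ (passageAt a (overPos a i)).id = i ∧
      (passageAt a (overPos a i)).isOver = true := by
  obtain ⟨k, ⟨hk, hid, hover⟩, -⟩ := ha.existsUnique_pos hi true
  simpa [overPos, -List.findIdx_lt_length] using
    findIdx_spec (P := fun p => p.id == i && p.isOver) ⟨k, hk, by simp [hid, hover]⟩

theorem underPos_spec (ha : ValidK a) (hi : i ∈ crossIds a) :
    underPos a i < a.length ∧ (passageAt a (underPos a i)).id = i ∧
      (passageAt a (underPos a i)).isOver = false := by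
  obtain ⟨k, ⟨hk, hid, hover⟩, -⟩ := ha.existsUnique_pos hi false
  simpa [underPos, -List.findIdx_lt_length] using
    findIdx_spec (P := fun p => p.id == i && !p.isOver) ⟨k, hk, by simp [hid, hover]⟩

theorem overPos_id (ha : ValidK a) (hk : k < a.length) (hover : (passageAt a k).isOver = true) :
    overPos a (passageAt a k).id = k :=
  have ⟨hlt, hid, ho⟩ := ha.overPos_spec (passageAt_id_mem_crossIds hk)
  ha.eq_of_id_isOver hlt hk hid (ho.trans hover.symm)

theorem underPos_id (ha : ValidK a) (hk : k < a.length) (hunder : (passageAt a k).isOver = false) :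
    underPos a (passageAt a k).id = k :=
  have ⟨hlt, hid, ho⟩ := ha.underPos_spec (passageAt_id_mem_crossIds hk)
  ha.eq_of_id_isOver hlt hk hid (ho.trans hunder.symm)

theorem sgn_id (ha : ValidK a) (hk : k < a.length) :
    sgn a (passageAt a k).id = (passageAt a k).sign := by
  obtain ⟨q, hq⟩ : ∃ q, a.find? (fun p => p.id == (passageAt a k).id) = some q :=
    Option.isSome_iff_exists.1 <| List.find?_isSome.2 ⟨_, passageAt_mem hk, by simp⟩
  have hid : q.id = (passageAt a k).id := by simpa using List.find?_some hq
  simpa [sgn, hq] using (ha _ (passageAt_mem hk)).2.2.2 q (List.mem_of_find?_eq_some hq) hid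

theorem partnerIdx_eq (ha : ValidK a) (hj : j < a.length) (hk : k < a.length)
    (hid : (passageAt a j).id = (passageAt a k).id)
    (hover : (passageAt a j).isOver = !(passageAt a k).isOver) : partnerIdx a k = j := by
  set candidates := (List.range a.length).filter
    (fun j => j != k && (passageAt a j).id == (passageAt a k).id) with hcandidates
  have hne : j ≠ k := by
    rintro rfl
    simp at hover
  have hj_mem : j ∈ candidates := by simp [hcandidates, hj, hne, hid]
  have hunique : ∀ l ∈ candidates, l = j := by
    intro l hl
    obtain ⟨hl, hlk, hlid⟩ : l < a.length ∧ l ≠ k ∧ (passageAt a l).id = (passageAt a k).id := by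
      simpa [hcandidates] using hl
    refine ha.eq_of_id_isOver hl hj (hlid.trans hid.symm) ?_
    rw [hover, Bool.eq_not]
    exact fun h => hlk (ha.eq_of_id_isOver hl hk hlid h)
  change candidates.headD 0 = j
  cases hc : candidates with
  | nil => simp [hc] at hj_mem
  | cons l _ => exact hunique l (by simp [hc])

theorem partnerIdx_spec (ha : ValidK a) (hk : k < a.length) :
    partnerIdx a k < a.length ∧ (passageAt a (partnerIdx a k)).id = (passageAt a k).id ∧
      (passageAt a (partnerIdx a k)).isOver = !(passageAt a k).isOver := by
  obtain ⟨j, ⟨hj, hid, hover⟩, -⟩ :=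
    ha.existsUnique_pos (passageAt_id_mem_crossIds hk) (!(passageAt a k).isOver)
  rw [ha.partnerIdx_eq hj hk hid hover]
  exact ⟨hj, hid, hover⟩

theorem partnerIdx_lt (ha : ValidK a) (hk : k < a.length) : partnerIdx a k < a.length :=
  (ha.partnerIdx_spec hk).1

theorem partnerIdx_partnerIdx (ha : ValidK a) (hk : k < a.length) :
    partnerIdx a (partnerIdx a k) = k :=
  have ⟨hlt, hid, hover⟩ := ha.partnerIdx_spec hk
  ha.partnerIdx_eq hk hlt hid.symm (by simp [hover])

theorem partnerIdx_ne (ha : ValidK a) (hk : k < a.length) : partnerIdx a k ≠ k := fun h => by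
  simpa [h] using (ha.partnerIdx_spec hk).2.2

theorem partnerIdx_overPos (ha : ValidK a) (hi : i ∈ crossIds a) :
    partnerIdx a (overPos a i) = underPos a i :=
  have ⟨hover, hover_id, hover_true⟩ := ha.overPos_spec hi
  have ⟨hunder, hunder_id, hunder_false⟩ := ha.underPos_spec hi
  ha.partnerIdx_eq hunder hover (hunder_id.trans hover_id.symm) (by simp [*])

theorem even_card_of_partnerIdx_mem (ha : ValidK a) {S : Finset ℕ} (hS : S ⊆ Finset.range a.length)
    (hclosed : ∀ k ∈ S, partnerIdx a k ∈ S) : Even S.card := by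
  have hlt : ∀ k ∈ S, k < a.length := fun k hk => Finset.mem_range.1 (hS hk)
  have hsum : ∑ _k ∈ S, (1 : ZMod 2) = 0 :=
    Finset.sum_involution (fun k _ => partnerIdx a k) (fun _ _ => CharTwo.add_self_eq_zero 1)
      (fun k hk _ => ha.partnerIdx_ne (hlt k hk)) hclosed
      (fun k hk => ha.partnerIdx_partnerIdx (hlt k hk))
  simpa [ZMod.natCast_eq_zero_iff_even] using hsum

theorem even_length (ha : ValidK a) : Even a.length := by
  simpa using ha.even_card_of_partnerIdx_mem subset_rfl
    fun k hk => Finset.mem_range.2 (ha.partnerIdx_lt (Finset.mem_range.1 hk))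

end ValidK

/-! ### The mirror image -/

theorem crossIds_switchAll (a : KCode) : crossIds (switchAll a) = crossIds a := by
  simp [crossIds, switchAll, Function.comp_def]

theorem overPos_switchAll (a : KCode) (i : ℕ) : overPos (switchAll a) i = underPos a i := by
  simp [overPos, underPos, switchAll, List.findIdx_map, Function.comp_def]

theorem underPos_switchAll (a : KCode) (i : ℕ) : underPos (switchAll a) i = overPos a i := by
  simp [overPos, underPos, switchAll, List.findIdx_map, Function.comp_def]

theorem sgn_switchAll (a : KCode) (i : ℕ) : sgn (switchAll a) i = -sgn a i := by
  rw [sgn, sgn, switchAll, List.find?_map]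
  cases h : a.find? (fun p => p.id == i) <;> simp [h]

theorem oddCross_switchAll (a : KCode) : OddCross (switchAll a) = OddCross a := by
  ext i
  simp only [OddCross, overPos_switchAll, underPos_switchAll, Nat.add_comm]

theorem oddWrithe_switchAll (a : KCode) : oddWrithe (switchAll a) = -oddWrithe a := by
  rw [oddWrithe, oddWrithe, crossIds_switchAll, oddCross_switchAll, List.sum_neg, List.map_map]
  congr 2
  ext i
  exact sgn_switchAll a i

/-! ### Faces -/

/-- The position cyclically preceding `k`: the arc entering passage `k` is the arc `prevPos a k`,
the arc leaving it is the arc `k`. -/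
def prevPos (a : KCode) (k : ℕ) : ℕ := (k + a.length - 1) % a.length

section prevPos

variable {a : KCode} {k : ℕ}

theorem prevPos_lt (hk : k < a.length) : prevPos a k < a.length :=
  Nat.mod_lt _ (by omega)

theorem prevPos_zero : prevPos a 0 = a.length - 1 := by
  rcases a.length.eq_zero_or_pos with h | h
  · simp [prevPos, h]
  · rw [prevPos, Nat.mod_eq_of_lt (by omega), Nat.zero_add]

theorem prevPos_succ (hk : k < a.length) : prevPos a (k + 1) = k := by
  rw [prevPos, show k + 1 + a.length - 1 = k + a.length by omega, Nat.add_mod_right,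
    Nat.mod_eq_of_lt hk]

theorem prevPos_of_pos (h0 : 0 < k) (hk : k < a.length) : prevPos a k = k - 1 := by
  obtain ⟨j, rfl⟩ := Nat.exists_eq_succ_of_ne_zero h0.ne'
  exact prevPos_succ (by omega)

theorem succ_prevPos_mod (hk : k < a.length) : (prevPos a k + 1) % a.length = k := by
  rw [prevPos, Nat.mod_add_mod, show k + a.length - 1 + 1 = k + a.length by omega,
    Nat.add_mod_right, Nat.mod_eq_of_lt hk]

theorem prevPos_succ_mod (hk : k < a.length) : prevPos a ((k + 1) % a.length) = k := by
  rcases (Nat.succ_le_of_lt hk).eq_or_lt with h | h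
  · rw [← Nat.succ_eq_add_one, h, Nat.mod_self, prevPos_zero]
    omega
  · rw [Nat.mod_eq_of_lt h, prevPos_succ hk]

end prevPos

/-- The darts of a diagram. The dart `(k, true)` traverses the arc `k` forwards, `(k, false)`
traverses it backwards; a dart also stands for the side of its arc whose face it bounds. -/
def darts (a : KCode) : Finset (ℕ × Bool) := Finset.range a.length ×ˢ Finset.univ

theorem mem_darts {a : KCode} {d : ℕ × Bool} : d ∈ darts a ↔ d.1 < a.length := by
  simp [darts]

/-- Whether the transverse strand crosses the passage at position `k` from right to left. -/
def crossedLeftward (a : KCode) (k : ℕ) : Bool :=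
  (passageAt a k).isOver == ((passageAt a k).sign == 1)

theorem nextEnd_eq (a : KCode) (k : ℕ) (b : Bool) :
    nextEnd a (k, b) = (partnerIdx a k, b ^^ !crossedLeftward a k) := by
  change (partnerIdx a k, if crossedLeftward a k then b else !b) = _
  cases crossedLeftward a k <;> simp

theorem headEnd_mapsTo (a : KCode) :
    Set.MapsTo (headEnd a) (darts a) (darts a) := fun d hd => by
  have := mem_darts.1 hd
  have : (d.1 + 1) % a.length < a.length := Nat.mod_lt _ (by omega)
  rw [Finset.mem_coe, mem_darts, headEnd]
  split <;> assumption

theorem dartFrom_mapsTo (a : KCode) :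
    Set.MapsTo (dartFrom a) (darts a) (darts a) := fun d hd => by
  have := mem_darts.1 hd
  have := prevPos_lt this
  rw [Finset.mem_coe, mem_darts, dartFrom]
  split <;> assumption

theorem dartFrom_headEnd {a : KCode} {d : ℕ × Bool} (hd : d ∈ darts a) :
    dartFrom a (headEnd a d) = (d.1, !d.2) := by
  obtain ⟨k, b⟩ := d
  have hk : k < a.length := mem_darts.1 hd
  cases b
  · rfl
  · exact congrArg (·, false) (prevPos_succ_mod hk)

theorem headEnd_not_dartFrom {a : KCode} {e : ℕ × Bool} (he : e ∈ darts a) :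
    headEnd a ((dartFrom a e).1, !(dartFrom a e).2) = e := by
  obtain ⟨k, b⟩ := e
  have hk : k < a.length := mem_darts.1 he
  cases b
  · rfl
  · exact congrArg (·, true) (succ_prevPos_mod hk)

namespace ValidK

variable {a : KCode} {d : ℕ × Bool} {k : ℕ}

theorem crossedLeftward_partnerIdx (ha : ValidK a) (hk : k < a.length) :
    crossedLeftward a (partnerIdx a k) = !crossedLeftward a k := by
  obtain ⟨hlt, hid, hover⟩ := ha.partnerIdx_spec hk
  rw [crossedLeftward, crossedLeftward, ha.sign_eq hlt hk hid, hover]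
  cases (passageAt a k).isOver <;> simp

theorem nextEnd_mapsTo (ha : ValidK a) : Set.MapsTo (nextEnd a) (darts a) (darts a) :=
  fun _ hd => mem_darts.2 (ha.partnerIdx_lt (mem_darts.1 hd))

theorem faceNext_mapsTo (ha : ValidK a) : Set.MapsTo (faceNext a) (darts a) (darts a) :=
  (dartFrom_mapsTo a).comp (ha.nextEnd_mapsTo.comp (headEnd_mapsTo a))

theorem nextEnd_injOn (ha : ValidK a) : Set.InjOn (nextEnd a) (darts a) := by
  rintro ⟨k, b⟩ hk ⟨j, c⟩ hj h
  rw [nextEnd_eq, nextEnd_eq, Prod.mk.injEq] at h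
  obtain rfl : k = j := by
    have hkj := congrArg (partnerIdx a) h.1
    rwa [ha.partnerIdx_partnerIdx (mem_darts.1 hk), ha.partnerIdx_partnerIdx (mem_darts.1 hj)]
      at hkj
  exact congrArg (k, ·) (Bool.xor_left_inj.1 h.2)

theorem faceNext_injOn (ha : ValidK a) : Set.InjOn (faceNext a) (darts a) := by
  have hhead : Set.InjOn (headEnd a) (darts a) := fun d hd d' hd' h => by
    have := congrArg (dartFrom a) h
    rw [dartFrom_headEnd hd, dartFrom_headEnd hd', Prod.mk.injEq, Bool.not_inj_iff] at this
    exact Prod.ext this.1 this.2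
  have hdart : Set.InjOn (dartFrom a) (darts a) := fun e he e' he' h => by
    rw [← headEnd_not_dartFrom he, h, headEnd_not_dartFrom he']
  exact hdart.comp (ha.nextEnd_injOn.comp hhead (headEnd_mapsTo a))
    (ha.nextEnd_mapsTo.comp (headEnd_mapsTo a))

theorem exists_faceNext_period (ha : ValidK a) (hd : d ∈ darts a) :
    ∃ p, 0 < p ∧ p ≤ 2 * a.length ∧ Function.IsPeriodicPt (faceNext a) p d := by
  have hmaps := ha.faceNext_mapsTo
  let f : darts a → darts a := hmaps.restrict
  have hf : Function.Injective f := hmaps.restrict_inj.2 ha.faceNext_injOn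
  have hcard : Fintype.card (darts a) = 2 * a.length := by
    rw [Fintype.card_coe, darts, Finset.card_product, Finset.card_range, Finset.card_univ,
      Fintype.card_bool, mul_comm]
  refine ⟨Function.minimalPeriod f ⟨d, hd⟩,
    Function.minimalPeriod_pos_of_mem_periodicPts (hf.mem_periodicPts _),
    hcard ▸ Function.minimalPeriod_le_card, ?_⟩
  have hsemi : Function.Semiconj Subtype.val f (faceNext a) := fun _ => rfl
  exact (Function.isPeriodicPt_minimalPeriod f ⟨d, hd⟩).map hsemi

end ValidK

theorem le_foldr_min {l : List ℕ} {z b : ℕ} : z ≤ l.foldr min b ↔ z ≤ b ∧ ∀ x ∈ l, z ≤ x := by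
  induction l with
  | nil => simp
  | cons x l ih => simp [ih, and_left_comm]

namespace ValidK

variable {a : KCode} {d : ℕ × Bool}

theorem le_faceRep_iff (ha : ValidK a) (hd : d ∈ darts a) {z : ℕ} :
    z ≤ faceRep a d ↔ ∀ t, z ≤ encDart ((faceNext a)^[t] d) := by
  obtain ⟨p, hpos, hle, hp⟩ := ha.exists_faceNext_period hd
  simp only [faceRep, le_foldr_min, List.forall_mem_map, List.mem_range]
  refine ⟨fun h t => ?_, fun h => ⟨h 0, fun t _ => h t⟩⟩
  rw [← hp.iterate_mod_apply]
  exact h.2 _ ((Nat.mod_lt t hpos).trans_le hle)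

theorem faceRep_faceNext (ha : ValidK a) (hd : d ∈ darts a) :
    faceRep a (faceNext a d) = faceRep a d := by
  obtain ⟨p, hpos, -, hp⟩ := ha.exists_faceNext_period hd
  refine eq_of_forall_le_iff fun z => ?_
  rw [ha.le_faceRep_iff (ha.faceNext_mapsTo hd), ha.le_faceRep_iff hd]
  refine ⟨fun h t => ?_, fun h t => h (t + 1)⟩
  have hback : (faceNext a)^[t + (p - 1)] (faceNext a d) = (faceNext a)^[t] d := by
    rw [← Function.iterate_succ_apply, show (t + (p - 1)).succ = t + p by omega,
      Function.iterate_add_apply, hp]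
  exact hback ▸ h (t + (p - 1))

end ValidK

/-- The faces of a diagram, each named by the smallest code of its darts. -/
def faces (a : KCode) : Finset ℕ := (darts a).image (faceRep a)

theorem card_faces (a : KCode) : (faces a).card = numFaces a := by
  rw [numFaces, ← List.card_toFinset]
  congr 1
  ext r
  simp only [faces, darts, Finset.mem_image, List.mem_toFinset, List.mem_map, List.mem_flatMap]
  simp [Prod.exists, or_comm, and_or_left]

/-! ### Face colourings and cycles modulo two -/

/-- A mod 2 colouring of the faces, given as a function on darts that is constant along the
boundary of every face. -/
def FaceFun (a : KCode) (g : ℕ × Bool → ZMod 2) : Prop :=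
  ∀ d ∈ darts a, g (faceNext a d) = g d

/-- The coboundary of a face colouring: the difference of the colours on the two sides of the
arc `k`. -/
def sideDiff (g : ℕ × Bool → ZMod 2) (k : ℕ) : ZMod 2 := g (k, false) + g (k, true)

/-- The sum of the values of an arc function on the arcs before and after the passage `k`. -/
def passageSum (a : KCode) (D : ℕ → ZMod 2) (k : ℕ) : ZMod 2 := D k + D (prevPos a k)

/-- A mod 2 cycle of arcs: at each crossing, the sum over its four arcs vanishes. -/
def IsCycle (a : KCode) (D : ℕ → ZMod 2) : Prop :=
  ∀ k < a.length, passageSum a D (partnerIdx a k) = passageSum a D k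

theorem IsCycle.ext {a : KCode} {D E : ℕ → ZMod 2} (ha : ValidK a) (hD : IsCycle a D)
    (hE : IsCycle a E) (h0 : D 0 = E 0)
    (hsum : ∀ i ∈ crossIds a, passageSum a D (overPos a i) = passageSum a E (overPos a i)) :
    ∀ k < a.length, D k = E k := by
  have hsum_all : ∀ k < a.length, passageSum a D k = passageSum a E k := by
    intro k hk
    have hi := passageAt_id_mem_crossIds hk
    cases hover : (passageAt a k).isOver with
    | true => simpa [ha.overPos_id hk hover] using hsum _ hi
    | false =>
      have hover_lt := (ha.overPos_spec hi).1
      rw [← ha.underPos_id hk hover, ← ha.partnerIdx_overPos hi, hD _ hover_lt, hE _ hover_lt,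
        hsum _ hi]
  intro k hk
  induction k with
  | zero => exact h0
  | succ k ih =>
    have hk_sum := hsum_all (k + 1) hk
    rwa [passageSum, passageSum, prevPos_succ (by omega), ih (by omega), add_left_inj] at hk_sum

theorem eq_add_sideDiff (g : ℕ × Bool → ZMod 2) (k : ℕ) (b : Bool) :
    g (k, !b) = g (k, b) + sideDiff g k := by
  cases b
  · rw [sideDiff, CharTwo.add_cancel_left, Bool.not_false]
  · rw [sideDiff, add_comm, CharTwo.add_cancel_right, Bool.not_true]

namespace FaceFun

variable {a : KCode} {g h : ℕ × Bool → ZMod 2} {k : ℕ}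

theorem corners (ha : ValidK a) (hg : FaceFun a g) (hk : k < a.length)
    (hleft : crossedLeftward a k = true) :
    g (prevPos a (partnerIdx a k), false) = g (prevPos a k, true) ∧
      g (partnerIdx a k, true) = g (k, false) ∧
      g (k, true) = g (prevPos a (partnerIdx a k), true) ∧
      g (prevPos a k, false) = g (partnerIdx a k, false) := by
  have hj := ha.partnerIdx_lt hk
  have hback := ha.partnerIdx_partnerIdx hk
  have hright : crossedLeftward a (partnerIdx a k) = false := by
    rw [ha.crossedLeftward_partnerIdx hk, hleft, Bool.not_true]
  have face_of_head {j : ℕ} (hj : j < a.length) :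
      g (dartFrom a (nextEnd a (j, true))) = g (prevPos a j, true) := by
    have hd : (prevPos a j, true) ∈ darts a := mem_darts.2 (prevPos_lt hj)
    rw [← hg _ hd, faceNext]
    simp only [headEnd, ↓reduceIte, succ_prevPos_mod hj]
  have face_of_tail {j : ℕ} (hj : j < a.length) :
      g (dartFrom a (nextEnd a (j, false))) = g (j, false) :=
    hg (j, false) (mem_darts.2 hj)
  have h₁ := face_of_head hk
  have h₂ := face_of_tail hk
  have h₃ := face_of_head hj
  have h₄ := face_of_tail hj
  rw [nextEnd_eq] at h₁ h₂ h₃ h₄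
  simp only [hleft, hright, hback] at h₁ h₂ h₃ h₄
  exact ⟨h₁, h₂, h₃, h₄⟩

theorem isCycle_sideDiff (ha : ValidK a) (hg : FaceFun a g) : IsCycle a (sideDiff g) := by
  intro k hk
  wlog hleft : crossedLeftward a k = true generalizing k
  · have := this _ (ha.partnerIdx_lt hk) (by simp [ha.crossedLeftward_partnerIdx hk, hleft])
    rw [ha.partnerIdx_partnerIdx hk] at this
    exact this.symm
  obtain ⟨h₁, h₂, h₃, h₄⟩ := hg.corners ha hk hleft
  rw [passageSum, passageSum, sideDiff, sideDiff, sideDiff, sideDiff, h₁, h₂, h₃, h₄]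
  ring

theorem left_eq_prev_add (ha : ValidK a) (hg : FaceFun a g) (hk : k < a.length) :
    g (k, false) = g (prevPos a k, false) + sideDiff g
      (if crossedLeftward a k then partnerIdx a k else prevPos a (partnerIdx a k)) := by
  split_ifs with hleft
  · obtain ⟨-, h₂, -, h₄⟩ := hg.corners ha hk hleft
    rw [← h₂, h₄]
    exact eq_add_sideDiff g _ false
  · have hleft' : crossedLeftward a (partnerIdx a k) = true := by
      simp [ha.crossedLeftward_partnerIdx hk, hleft]
    obtain ⟨h₁, -, -, h₄⟩ := hg.corners ha (ha.partnerIdx_lt hk) hleft'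
    rw [ha.partnerIdx_partnerIdx hk] at h₁ h₄
    rw [← h₄, h₁]
    exact eq_add_sideDiff g _ true

theorem ext (ha : ValidK a) (hg : FaceFun a g) (hh : FaceFun a h)
    (h0 : g (0, false) = h (0, false)) (hdiff : ∀ k < a.length, sideDiff g k = sideDiff h k) :
    ∀ d ∈ darts a, g d = h d := by
  have hleft : ∀ k < a.length, g (k, false) = h (k, false) := by
    intro k hk
    induction k with
    | zero => exact h0
    | succ k ih =>
      rw [hg.left_eq_prev_add ha hk, hh.left_eq_prev_add ha hk, prevPos_succ (by omega),
        ih (by omega), hdiff]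
      have hj := ha.partnerIdx_lt hk
      split_ifs
      exacts [hj, prevPos_lt hj]
  rintro ⟨k, b⟩ hd
  have hk : k < a.length := mem_darts.1 hd
  cases b
  · exact hleft k hk
  · rw [show g (k, true) = _ from eq_add_sideDiff g k false,
      show h (k, true) = _ from eq_add_sideDiff h k false, hleft k hk, hdiff k hk]

end FaceFun

/-- The face colouring, as a function on darts, that gives face `r` the colour `h r`. -/
noncomputable def faceColouring (a : KCode) (h : faces a → ZMod 2) (d : ℕ × Bool) : ZMod 2 :=
  Function.extend Subtype.val h 0 (faceRep a d)

theorem faceFun_faceColouring {a : KCode} (ha : ValidK a) (h : faces a → ZMod 2) :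
    FaceFun a (faceColouring a h) := fun d hd => by
  rw [faceColouring, faceColouring, ha.faceRep_faceNext hd]

/-- The base colour and the data determining the coboundary of a face colouring as a cycle: its
value at the base arc and its passage sums at the crossings. -/
noncomputable def colouringData (a : KCode) (h : faces a → ZMod 2) :
    ZMod 2 × ZMod 2 × ((crossIds a).toFinset → ZMod 2) :=
  let g := faceColouring a h
  (g (0, false), sideDiff g 0, fun i => passageSum a (sideDiff g) (overPos a i))

theorem colouringData_injective {a : KCode} (ha : ValidK a) :
    Function.Injective (colouringData a) := by
  intro h h' hdata
  simp only [colouringData, Prod.mk.injEq, funext_iff, Subtype.forall, List.mem_toFinset] at hdata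
  obtain ⟨hbase, hdiff, hsum⟩ := hdata
  have hg := faceFun_faceColouring ha h
  have hg' := faceFun_faceColouring ha h'
  have hdarts := hg.ext ha hg' hbase
    ((hg.isCycle_sideDiff ha).ext ha (hg'.isCycle_sideDiff ha) hdiff hsum)
  ext ⟨r, hr⟩
  obtain ⟨d, hd, rfl⟩ := Finset.mem_image.1 hr
  have hextend : ∀ f : faces a → ZMod 2, faceColouring a f d = f ⟨faceRep a d, hr⟩ := fun f =>
    Subtype.val_injective.extend_apply f 0 ⟨faceRep a d, hr⟩
  rw [← hextend h, ← hextend h', hdarts d hd]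

/-- Colourings of `n + 2` faces and cycles with a base colour are both counted by `2 ^ (n + 2)`, so
for planar codes the injection of the former into the latter is onto. -/
theorem colouringData_surjective {a : KCode} (ha : ValidK a)
    (hplanar : numFaces a = numCross a + 2) : Function.Surjective (colouringData a) := by
  refine ((Fintype.bijective_iff_injective_and_card _).2
    ⟨colouringData_injective ha, ?_⟩).surjective
  have hcross : (crossIds a).toFinset.card = numCross a :=
    List.toFinset_card_of_nodup (List.nodup_dedup _)
  simp only [Fintype.card_fun, Fintype.card_prod, ZMod.card, Fintype.card_coe, card_faces,
    hcross, hplanar]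
  ring

theorem IsCycle.exists_faceFun_sideDiff_eq {a : KCode} {D : ℕ → ZMod 2} (hD : IsCycle a D)
    (ha : ValidK a) (hplanar : numFaces a = numCross a + 2) :
    ∃ g, FaceFun a g ∧ ∀ k < a.length, sideDiff g k = D k := by
  obtain ⟨h, hh⟩ := colouringData_surjective ha hplanar
    (0, D 0, fun i => passageSum a D (overPos a i))
  simp only [colouringData, Prod.mk.injEq, funext_iff, Subtype.forall, List.mem_toFinset] at hh
  obtain ⟨-, hbase, hsum⟩ := hh
  have hg := faceFun_faceColouring ha h
  exact ⟨_, hg, (hg.isCycle_sideDiff ha).ext ha hD hbase hsum⟩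

/-! ### Crossings of planar codes -/

/-- For passages `p < q` of one crossing, the indicator function of the arcs of the loop at the
crossing that does not run along the arcs `p, …, q - 1`. -/
def outerLoop (p q k : ℕ) : ZMod 2 := if p ≤ k ∧ k < q then 0 else 1

section

variable {a : KCode} {p q k : ℕ}

theorem passageSum_outerLoop (hpq : p < q) (hq : q < a.length) (hk : k < a.length) :
    passageSum a (outerLoop p q) k = if k = p ∨ k = q then 1 else 0 := by
  have hprev : prevPos a k = if k = 0 then a.length - 1 else k - 1 := by
    split_ifs with h
    · rw [h, prevPos_zero]
    · exact prevPos_of_pos (Nat.pos_of_ne_zero h) hk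
  rw [passageSum, outerLoop, outerLoop, hprev]
  split_ifs <;> first | omega | rfl

theorem isCycle_outerLoop (ha : ValidK a) (hpq : p < q) (hq : q < a.length)
    (hpartner : partnerIdx a p = q) : IsCycle a (outerLoop p q) := by
  have hp : p < a.length := hpq.trans hq
  intro k hk
  rw [passageSum_outerLoop hpq hq hk, passageSum_outerLoop hpq hq (ha.partnerIdx_lt hk)]
  have hback : partnerIdx a q = p := hpartner ▸ ha.partnerIdx_partnerIdx hp
  have hmem : partnerIdx a k = p ∨ partnerIdx a k = q ↔ k = p ∨ k = q := by
    have := ha.partnerIdx_partnerIdx hk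
    grind
  simp only [hmem]

theorem outerLoop_eq_of_ne (hp : k ≠ p) :
    outerLoop p q k = if k ∈ Finset.Ioo p q then 0 else 1 := by
  simp only [outerLoop, Finset.mem_Ioo, hp.symm.le_iff_lt]

theorem outerLoop_prevPos_eq_of_ne (hpq : p < q) (hq : q < a.length) (hk : k < a.length)
    (hkp : k ≠ p) (hkq : k ≠ q) :
    outerLoop p q (prevPos a k) = if k ∈ Finset.Ioo p q then 0 else 1 := by
  have hsum := passageSum_outerLoop hpq hq hk
  rw [if_neg (by tauto), passageSum, CharTwo.add_eq_zero] at hsum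
  rw [← hsum, outerLoop_eq_of_ne hkp]

namespace FaceFun

variable {g : ℕ × Bool → ZMod 2}

theorem left_eq_left_of_partnerIdx_eq (ha : ValidK a) (hg : FaceFun a g) (hp : p < a.length)
    (hpartner : partnerIdx a p = q) (hp_diff : sideDiff g p = 0)
    (hq_diff : sideDiff g (prevPos a q) = 0) : g (p, false) = g (prevPos a q, false) := by
  subst hpartner
  cases hleft : crossedLeftward a p with
  | true =>
    have hsame : ∀ k, sideDiff g k = 0 → g (k, true) = g (k, false) := fun k hk => by
      simpa [hk] using eq_add_sideDiff g k false
    rw [← hsame _ hp_diff, ← hsame _ hq_diff]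
    exact (hg.corners ha hp hleft).2.2.1
  | false =>
    have hleft' : crossedLeftward a (partnerIdx a p) = true := by
      simp [ha.crossedLeftward_partnerIdx hp, hleft]
    have hcorner := (hg.corners ha (ha.partnerIdx_lt hp) hleft').2.2.2
    rw [ha.partnerIdx_partnerIdx hp] at hcorner
    exact hcorner.symm

/-- Walking along the inner loop, the colour on the left changes exactly at the crossings with the
outer loop. -/
theorem left_eq_add_sum_crossings (ha : ValidK a) (hg : FaceFun a g) (hpq : p < q)
    (hq : q < a.length) (hpartner : partnerIdx a p = q)
    (hdiff : ∀ k < a.length, sideDiff g k = outerLoop p q k) (hpk : p ≤ k) (hkq : k < q) :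
    g (k, false) = g (p, false) +
      ∑ j ∈ Finset.Ioc p k, if partnerIdx a j ∈ Finset.Ioo p q then 0 else 1 := by
  induction k, hpk using Nat.le_induction with
  | base => simp
  | succ k hpk ih =>
    have hk : k + 1 < a.length := hkq.trans hq
    have hj := ha.partnerIdx_lt hk
    have hback := ha.partnerIdx_partnerIdx hk
    have hqp : partnerIdx a q = p := hpartner ▸ ha.partnerIdx_partnerIdx (hpq.trans hq)
    have hjp : partnerIdx a (k + 1) ≠ p := fun h => hkq.ne (by rw [← hback, h, hpartner])
    have hjq : partnerIdx a (k + 1) ≠ q := fun h => by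
      rw [h, hqp] at hback
      omega
    rw [hg.left_eq_prev_add ha hk, prevPos_succ (by omega), ih (by omega),
      Finset.sum_Ioc_succ_top hpk, add_assoc]
    congr 2
    split_ifs with hleft hIoo hIoo
    all_goals
      first
      | rw [hdiff _ hj, outerLoop_eq_of_ne hjp]
      | rw [hdiff _ (prevPos_lt hj), outerLoop_prevPos_eq_of_ne hpq hq hj hjp hjq]
      simp [hIoo]

end FaceFun

/-- Both the passages inside the inner loop that meet the outer loop and those that meet the inner
loop itself are even in number. -/
theorem even_card_Ioo_of_partnerIdx_eq (ha : ValidK a) (hplanar : numFaces a = numCross a + 2)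
    (hpq : p < q) (hq : q < a.length) (hpartner : partnerIdx a p = q) :
    Even (Finset.Ioo p q).card := by
  have hp : p < a.length := hpq.trans hq
  obtain ⟨g, hg, hdiff⟩ := (isCycle_outerLoop ha hpq hq hpartner).exists_faceFun_sideDiff_eq ha
    hplanar
  have hprev : prevPos a q = q - 1 := prevPos_of_pos (by omega) hq
  have hends : g (p, false) = g (q - 1, false) := hprev ▸
    hg.left_eq_left_of_partnerIdx_eq ha hp hpartner
      (by rw [hdiff p hp, outerLoop, if_pos ⟨le_rfl, hpq⟩])
      (by rw [hprev, hdiff _ (by omega), outerLoop, if_pos (by omega)])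
  have hwalk := hg.left_eq_add_sum_crossings ha hpq hq hpartner hdiff
    (k := q - 1) (by omega) (by omega)
  have hIoo : Finset.Ioc p (q - 1) = Finset.Ioo p q := by
    ext k
    simp only [Finset.mem_Ioc, Finset.mem_Ioo]
    omega
  have houter : Even ((Finset.Ioo p q).filter (partnerIdx a · ∉ Finset.Ioo p q)).card := by
    rw [hIoo, hends, left_eq_add] at hwalk
    simp only [← ite_not (_ ∈ _)] at hwalk
    rwa [Finset.sum_boole, ZMod.natCast_eq_zero_iff_even] at hwalk
  have hinner : Even ((Finset.Ioo p q).filter (partnerIdx a · ∈ Finset.Ioo p q)).card := by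
    have hlt : ∀ k ∈ Finset.Ioo p q, k < a.length := fun k hk => (Finset.mem_Ioo.1 hk).2.trans hq
    refine ha.even_card_of_partnerIdx_mem (fun k hk => ?_) fun k hk => ?_
    · exact Finset.mem_range.2 (hlt k (Finset.mem_filter.1 hk).1)
    · obtain ⟨hk, hj⟩ := Finset.mem_filter.1 hk
      exact Finset.mem_filter.2 ⟨hj, by rwa [ha.partnerIdx_partnerIdx (hlt k hk)]⟩
  rw [← Finset.card_filter_add_card_filter_not (s := Finset.Ioo p q)
    (partnerIdx a · ∈ Finset.Ioo p q)]
  exact hinner.add houter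

theorem odd_add_partnerIdx (ha : ValidK a) (hplanar : numFaces a = numCross a + 2)
    (hk : k < a.length) : Odd (k + partnerIdx a k) := by
  have hj := ha.partnerIdx_lt hk
  have hback := ha.partnerIdx_partnerIdx hk
  rcases (ha.partnerIdx_ne hk).lt_or_gt with h | h
  · have := even_card_Ioo_of_partnerIdx_eq ha hplanar h hk hback
    grind [Nat.card_Ioo]
  · have := even_card_Ioo_of_partnerIdx_eq ha hplanar h hj rfl
    grind [Nat.card_Ioo]

end

theorem oddWrithe_eq_zero_of_isClassical {a : KCode} (ha : ValidK a) (hclassical : IsClassical a) :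
    oddWrithe a = 0 := by
  rcases hclassical with rfl | hplanar
  · rfl
  have heven : ∀ i ∈ crossIds a, OddCross a i = false := by
    intro i hi
    have hodd := odd_add_partnerIdx ha hplanar (ha.overPos_spec hi).1
    rw [ha.partnerIdx_overPos hi, Nat.odd_iff] at hodd
    simp [OddCross, hodd]
  rw [oddWrithe, List.filter_eq_nil_iff.2 (by simpa using heven), List.map_nil, List.sum_nil]

/-! ### The odd writhe of parity-tagged passages -/

/-- A passage together with the parity of its position. -/
abbrev TaggedPassage := Passage × ZMod 2

/-- The multiset of the passages of a code tagged with the parities of their positions, where the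
first position counts as `b`. -/
def parityTags : ZMod 2 → KCode → Multiset TaggedPassage
  | _, [] => 0
  | b, p :: a => (p, b) ::ₘ parityTags (b + 1) a

theorem parityTags_append (b : ZMod 2) (x y : KCode) :
    parityTags b (x ++ y) = parityTags b x + parityTags (b + x.length) y := by
  induction x generalizing b with
  | nil => simp [parityTags]
  | cons p x ih => simp [parityTags, ih, add_assoc, add_comm (1 : ZMod 2)]

theorem parityTags_append_of_even {x : KCode} (hx : Even x.length) (b : ZMod 2) (y : KCode) :
    parityTags b (x ++ y) = parityTags b x + parityTags b y := by
  rw [parityTags_append, (ZMod.natCast_eq_zero_iff_even).2 hx, add_zero]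

theorem map_fst_parityTags (b : ZMod 2) (a : KCode) : (parityTags b a).map Prod.fst = a := by
  induction a generalizing b with
  | nil => rfl
  | cons p a ih => simp [parityTags, ih]

theorem parityTags_add (b c : ZMod 2) (a : KCode) :
    parityTags (b + c) a = (parityTags b a).map (Prod.map id (· + c)) := by
  induction a generalizing b with
  | nil => rfl
  | cons p a ih => simp [parityTags, ← ih, add_right_comm]

theorem parityTags_relabel (f : ℕ → ℕ) (b : ZMod 2) (a : KCode) :
    parityTags b (relabel f a) =
      (parityTags b a).map (Prod.map (fun p => { p with id := f p.id }) id) := by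
  induction a generalizing b with
  | nil => rfl
  | cons p a ih =>
    simp only [relabel, List.map_cons, parityTags, Multiset.map_cons] at ih ⊢
    rw [ih]
    rfl

theorem parityTags_zero_eq_map_range (a : KCode) :
    parityTags 0 a = (Multiset.range a.length).map fun k => (passageAt a k, (k : ZMod 2)) := by
  induction a using List.reverseRecOn with
  | nil => rfl
  | append_singleton a p ih =>
    have hlt : ∀ k < a.length, passageAt (a ++ [p]) k = passageAt a k := fun k hk =>
      List.getD_append _ _ _ _ hk
    have hlast : passageAt (a ++ [p]) a.length = p := by simp [passageAt]
    rw [parityTags_append, ih, List.length_append, List.length_singleton, Multiset.range_succ,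
      Multiset.map_cons, hlast, ← Multiset.singleton_add, add_comm]
    congr 1
    · simp [parityTags]
    · exact Multiset.map_congr rfl fun k hk => by rw [hlt k (Multiset.mem_range.1 hk)]

/-- The contribution of an ordered pair of tagged passages to the odd writhe: the sign of their
crossing if `x` is its over-passage and `y` its under-passage, at positions of the same parity. -/
def pairSign (x y : TaggedPassage) : ℤ :=
  if x.1.id = y.1.id ∧ x.1.isOver = true ∧ y.1.isOver = false ∧ x.2 = y.2 then x.1.sign else 0

/-- The odd writhe of a multiset of tagged passages. -/
def tagWrithe (m : Multiset TaggedPassage) : ℤ :=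
  (m.map fun x => (m.map (pairSign x)).sum).sum

theorem tagWrithe_map {f : TaggedPassage → TaggedPassage}
    (hf : ∀ x y, pairSign (f x) (f y) = pairSign x y) (m : Multiset TaggedPassage) :
    tagWrithe (m.map f) = tagWrithe m := by
  simp [tagWrithe, hf]

theorem tagWrithe_map_add (c : ZMod 2) (m : Multiset TaggedPassage) :
    tagWrithe (m.map (Prod.map id (· + c))) = tagWrithe m :=
  tagWrithe_map (fun x y => by simp [pairSign]) m

theorem tagWrithe_add {m m' : Multiset TaggedPassage}
    (hdisj : ∀ x ∈ m, ∀ y ∈ m', x.1.id ≠ y.1.id) :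
    tagWrithe (m + m') = tagWrithe m + tagWrithe m' := by
  have hcross : ∀ x ∈ m, (m'.map (pairSign x)).sum = 0 := fun x hx =>
    Multiset.sum_eq_zero <| Multiset.forall_mem_map_iff.2 fun y hy => by
      simp [pairSign, hdisj x hx y hy]
  have hcross' : ∀ y ∈ m', (m.map (pairSign y)).sum = 0 := fun y hy =>
    Multiset.sum_eq_zero <| Multiset.forall_mem_map_iff.2 fun x hx => by
      simp [pairSign, (hdisj x hx y hy).symm]
  simp only [tagWrithe, Multiset.map_add, Multiset.sum_add]
  congr 2
  · exact Multiset.map_congr rfl fun x hx => by rw [hcross x hx, add_zero]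
  · exact Multiset.map_congr rfl fun y hy => by rw [hcross' y hy, zero_add]

theorem tagWrithe_crossing (i : ℕ) (o : Bool) (s : ℤ) (t t' : ZMod 2) :
    tagWrithe {(⟨i, o, s⟩, t), (⟨i, !o, s⟩, t')} = if t = t' then s else 0 := by
  cases o
  · simp [tagWrithe, pairSign, eq_comm (a := t')]
  · simp [tagWrithe, pairSign]

theorem tagWrithe_parityTags_eq_sum (a : KCode) :
    tagWrithe (parityTags 0 a) = ∑ k ∈ Finset.range a.length, ∑ j ∈ Finset.range a.length,
      pairSign (passageAt a k, k) (passageAt a j, j) := by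
  simp only [tagWrithe, parityTags_zero_eq_map_range, Multiset.map_map]
  rfl

theorem oddWrithe_eq_sum (a : KCode) :
    oddWrithe a = ∑ i ∈ (crossIds a).toFinset, if OddCross a i then sgn a i else 0 := by
  have hnodup : (crossIds a).Nodup := List.nodup_dedup _
  rw [oddWrithe, ← List.sum_toFinset _ (hnodup.filter _), List.toFinset_filter, Finset.sum_filter]

namespace ValidK

variable {a : KCode} {i : ℕ}

theorem sum_pairSign_overPos (ha : ValidK a) (hi : i ∈ crossIds a) :
    ∑ j ∈ Finset.range a.length,
        pairSign (passageAt a (overPos a i), overPos a i) (passageAt a j, j) =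
      if OddCross a i then sgn a i else 0 := by
  obtain ⟨hover, hover_id, hover_true⟩ := ha.overPos_spec hi
  obtain ⟨hunder, hunder_id, hunder_false⟩ := ha.underPos_spec hi
  have hparity : OddCross a i = true ↔ (overPos a i : ZMod 2) = (underPos a i : ZMod 2) := by
    rw [OddCross, beq_iff_eq, ZMod.natCast_eq_natCast_iff']
    omega
  have hsgn : (passageAt a (overPos a i)).sign = sgn a i := by
    rw [← ha.sgn_id hover, hover_id]
  rw [Finset.sum_eq_single_of_mem _ (Finset.mem_range.2 hunder)]
  · simp [pairSign, hover_id, hunder_id, hover_true, hunder_false, hparity, hsgn]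
  · intro j hj hne
    refine if_neg fun ⟨hid, _, hj_false, _⟩ => hne ?_
    exact ha.eq_of_id_isOver (Finset.mem_range.1 hj) hunder
      (hid.symm.trans (hover_id.trans hunder_id.symm)) (hj_false.trans hunder_false.symm)

theorem tagWrithe_parityTags (ha : ValidK a) : tagWrithe (parityTags 0 a) = oddWrithe a := by
  rw [tagWrithe_parityTags_eq_sum, oddWrithe_eq_sum]
  refine (Finset.sum_of_injOn (overPos a) ?_ ?_ ?_ ?_).symm
  · intro i hi j hj h
    rw [Finset.mem_coe, List.mem_toFinset] at hi hj
    rw [← (ha.overPos_spec hi).2.1, h, (ha.overPos_spec hj).2.1]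
  · intro i hi
    rw [Finset.mem_coe, List.mem_toFinset] at hi
    exact Finset.mem_coe.2 (Finset.mem_range.2 (ha.overPos_spec hi).1)
  · intro k hk hnot
    have hk := Finset.mem_range.1 hk
    have hunder : (passageAt a k).isOver ≠ true := fun hover =>
      hnot ⟨_, by simpa using passageAt_id_mem_crossIds hk, ha.overPos_id hk hover⟩
    exact Finset.sum_eq_zero fun j _ => by simp [pairSign, hunder]
  · exact fun i hi => (ha.sum_pairSign_overPos (List.mem_toFinset.1 hi)).symm

end ValidK

/-! ### Isotopy invariance -/

theorem validK_congr_of_perm {a b : KCode} (h : a.Perm b) : ValidK a ↔ ValidK b := by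
  simp only [ValidK, h.mem_iff, fun P : Passage → Bool => (h.filter P).length_eq]

theorem validK_append {x y : KCode} (hdisj : ∀ p ∈ x, ∀ q ∈ y, p.id ≠ q.id) :
    ValidK (x ++ y) ↔ ValidK x ∧ ValidK y := by
  have hx : ∀ p ∈ x, ∀ P : Passage → Bool, y.filter (fun q => q.id == p.id && P q) = [] :=
    fun p hp P => List.filter_eq_nil_iff.2 fun q hq => by simp [(hdisj p hp q hq).symm]
  have hy : ∀ p ∈ y, ∀ P : Passage → Bool, x.filter (fun q => q.id == p.id && P q) = [] :=
    fun p hp P => List.filter_eq_nil_iff.2 fun q hq => by simp [hdisj q hq p hp]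
  unfold ValidK
  rw [List.forall_mem_append]
  refine and_congr (forall₂_congr fun p hp => ?_) (forall₂_congr fun p hp => ?_)
  · have hsign : ∀ q ∈ y, q.id = p.id → q.sign = p.sign := fun q hq h =>
      absurd h.symm (hdisj p hp q hq)
    simp only [List.filter_append, hx p hp, List.append_nil, List.forall_mem_append,
      and_iff_left hsign]
  · have hsign : ∀ q ∈ x, q.id = p.id → q.sign = p.sign := fun q hq h =>
      absurd h (hdisj q hq p hp)
    simp only [List.filter_append, hy p hp, List.nil_append, List.forall_mem_append,
      and_iff_right hsign]

theorem ValidK.disjoint_of_append {x y : KCode} (hxy : ValidK (x ++ y)) (hx : ValidK x) :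
    ∀ p ∈ x, ∀ q ∈ y, p.id ≠ q.id := by
  intro p hp q hq hid
  have hcount : ∀ P : Passage → Bool, P q → (x.filter P).length = 1 →
      ((x ++ y).filter P).length ≠ 1 := fun P hPq hxP hxyP => by
    rw [List.filter_append, List.length_append, hxP, Nat.add_eq_left, List.length_eq_zero_iff,
      List.filter_eq_nil_iff] at hxyP
    exact hxyP q hq hPq
  obtain ⟨-, hover, hunder, -⟩ := hx p hp
  obtain ⟨-, hover', hunder', -⟩ := hxy p (List.mem_append_left y hp)
  cases ho : q.isOver with
  | true => exact hcount _ (by simp [hid, ho]) hover hover'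
  | false => exact hcount _ (by simp [hid, ho]) hunder hunder'

theorem validK_crossing (i : ℕ) (o : Bool) {s : ℤ} (hs : s = 1 ∨ s = -1) :
    ValidK [⟨i, o, s⟩, ⟨i, !o, s⟩] := by
  cases o <;> simp [ValidK, hs]

theorem validK_relabel {f : ℕ → ℕ} (hf : Function.Injective f) (a : KCode) :
    ValidK (relabel f a) ↔ ValidK a := by
  have hbeq : ∀ i j, (f i == f j) = (i == j) := fun i j => Bool.eq_iff_iff.2 (by simp [hf.eq_iff])
  simp only [ValidK, relabel, List.forall_mem_map, List.filter_map, List.length_map, hf.eq_iff,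
    Function.comp_def, hbeq]

/-- Both codes are invalid, or both are valid and have the same odd writhe. -/
def SameOddWrithe (a b : KCode) : Prop :=
  (ValidK a ↔ ValidK b) ∧ (ValidK a → oddWrithe a = oddWrithe b)

theorem SameOddWrithe.of_tagWrithe {a b : KCode} (hvalid : ValidK a ↔ ValidK b)
    (h : ValidK a → tagWrithe (parityTags 0 a) = tagWrithe (parityTags 0 b)) :
    SameOddWrithe a b :=
  ⟨hvalid, fun ha => by
    rw [← ha.tagWrithe_parityTags, h ha, (hvalid.1 ha).tagWrithe_parityTags]⟩

theorem sameOddWrithe_relabel {f : ℕ → ℕ} (hf : Function.Injective f) (a : KCode) :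
    SameOddWrithe a (relabel f a) := by
  refine .of_tagWrithe (validK_relabel hf a).symm fun _ => ?_
  rw [parityTags_relabel, tagWrithe_map fun x y => by simp [pairSign, hf.eq_iff]]

theorem sameOddWrithe_rotate (x y : KCode) : SameOddWrithe (x ++ y) (y ++ x) := by
  refine .of_tagWrithe (validK_congr_of_perm List.perm_append_comm) fun hxy => ?_
  have hlength : (y.length : ZMod 2) = x.length := by
    rw [← CharTwo.add_eq_zero, add_comm, ← Nat.cast_add, ← List.length_append,
      ZMod.natCast_eq_zero_iff_even]
    exact hxy.even_length
  rw [← tagWrithe_map_add x.length, parityTags_append, parityTags_append, Multiset.map_add,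
    ← parityTags_add, ← parityTags_add, hlength, add_assoc, CharTwo.add_self_eq_zero, add_zero,
    add_comm]

theorem perm_append_of_parityTags_eq_add {b : ZMod 2} {a x y : KCode}
    {m m' : Multiset TaggedPassage} (h : parityTags b a = m + m') (hm : m.map Prod.fst = x)
    (hm' : m'.map Prod.fst = y) : a.Perm (x ++ y) := by
  rw [← Multiset.coe_eq_coe, ← Multiset.coe_add, ← hm, ← hm', ← Multiset.map_add, ← h,
    map_fst_parityTags]

theorem tagWrithe_add_of_map_fst {m m' : Multiset TaggedPassage} {x y : KCode}
    (hm : m.map Prod.fst = x) (hm' : m'.map Prod.fst = y)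
    (hdisj : ∀ p ∈ x, ∀ q ∈ y, p.id ≠ q.id) : tagWrithe (m + m') = tagWrithe m + tagWrithe m' := by
  refine tagWrithe_add fun t ht t' ht' => hdisj _ ?_ _ ?_
  · exact Multiset.mem_coe.1 (hm ▸ Multiset.mem_map_of_mem Prod.fst ht)
  · exact Multiset.mem_coe.1 (hm' ▸ Multiset.mem_map_of_mem Prod.fst ht')

theorem sameOddWrithe_of_insert {a a' u : KCode} {m : Multiset TaggedPassage}
    (h : parityTags 0 a' = parityTags 0 a + m) (hm : m.map Prod.fst = u) (hu : ValidK u)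
    (hdisj : ∀ p ∈ a, ∀ q ∈ u, p.id ≠ q.id) (hzero : tagWrithe m = 0) : SameOddWrithe a a' := by
  have hperm := perm_append_of_parityTags_eq_add h (map_fst_parityTags 0 a) hm
  refine .of_tagWrithe ?_ fun _ => ?_
  · rw [validK_congr_of_perm hperm, validK_append hdisj, and_iff_left hu]
  · rw [h, tagWrithe_add_of_map_fst (map_fst_parityTags 0 a) hm hdisj, hzero, add_zero]

theorem sameOddWrithe_of_shift {a a' u : KCode} {m r : Multiset TaggedPassage}
    (h : parityTags 0 a = m + r) (h' : parityTags 0 a' = m.map (Prod.map id (· + 1)) + r)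
    (hm : m.map Prod.fst = u) (hu : ValidK u) : SameOddWrithe a a' := by
  obtain ⟨y, hr⟩ : ∃ y : KCode, r.map Prod.fst = y := ⟨_, (Multiset.coe_toList _).symm⟩
  have hm' : (m.map (Prod.map id (· + 1))).map Prod.fst = u := by
    rw [Multiset.map_map, ← hm]
    rfl
  have hperm := perm_append_of_parityTags_eq_add h hm hr
  refine .of_tagWrithe ?_ fun ha => ?_
  · rw [validK_congr_of_perm hperm,
      validK_congr_of_perm (perm_append_of_parityTags_eq_add h' hm' hr)]
  · have hdisj := ((validK_congr_of_perm hperm).1 ha).disjoint_of_append hu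
    rw [h, h', tagWrithe_add_of_map_fst hm hr hdisj, tagWrithe_add_of_map_fst hm' hr hdisj,
      tagWrithe_map_add]

/-- Segments of even length are replaced without disturbing the parities of the other positions. -/
theorem ReplC.exists_parityTags_eq {c c' : KCode} {segs : List (KCode × KCode)}
    (h : ReplC c c' segs []) (heven : ∀ s ∈ segs, Even s.1.length ∧ Even s.2.length) (b : ZMod 2) :
    ∃ (r : Multiset TaggedPassage) (T : List (ZMod 2 × KCode × KCode)), T.map Prod.snd = segs ∧
      parityTags b c = (T.map fun t => parityTags t.1 t.2.1).sum + r ∧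
      parityTags b c' = (T.map fun t => parityTags t.1 t.2.2).sum + r := by
  generalize hrest : ([] : List (KCode × KCode)) = rest at h
  induction h generalizing b with
  | nil c segs => exact ⟨parityTags b c, [], hrest, by simp, by simp⟩
  | @cons y y' segs _ x u v _ ih =>
    obtain ⟨⟨hu, hv⟩, hsegs⟩ := List.forall_mem_cons.1 heven
    obtain ⟨r, T, rfl, hy, hy'⟩ := ih hsegs (b + x.length) hrest
    refine ⟨parityTags b x + r, (b + x.length, u, v) :: T, rfl, ?_, ?_⟩
    · rw [List.append_assoc, parityTags_append, parityTags_append_of_even hu, hy, List.map_cons,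
        List.sum_cons]
      abel
    · rw [List.append_assoc, parityTags_append, parityTags_append_of_even hv, hy', List.map_cons,
        List.sum_cons]
      abel

theorem forall_id_ne_iff {a : KCode} {i : ℕ} : (∀ p ∈ a, p.id ≠ i) ↔ i ∉ crossIds a := by
  simp [mem_crossIds]

theorem sameOddWrithe_r1 {c c' : KCode} {i : ℕ} {o : Bool} {s : ℤ} (hs : s = 1 ∨ s = -1)
    (hi : i ∉ crossIds c) (h : ReplC c c' [([], [⟨i, o, s⟩, ⟨i, !o, s⟩])] []) :
    SameOddWrithe c c' := by
  obtain ⟨r, T, hT, hc, hc'⟩ := h.exists_parityTags_eq (by simp) 0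
  obtain ⟨b, rfl⟩ : ∃ b, T = [(b, [], [⟨i, o, s⟩, ⟨i, !o, s⟩])] := by
    simpa [List.map_eq_cons_iff] using hT
  simp only [List.map_cons, List.map_nil, List.sum_singleton, parityTags, zero_add] at hc hc'
  refine sameOddWrithe_of_insert (by rw [hc', hc, add_comm]) rfl (validK_crossing i o hs) ?_ ?_
  · simpa using forall_id_ne_iff.2 hi
  · exact (tagWrithe_crossing i o s b (b + 1)).trans (if_neg (by simp))

theorem tagWrithe_bigon {i j : ℕ} (hij : i ≠ j) (o : Bool) (s : ℤ) (b t : ZMod 2) :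
    tagWrithe ({(⟨i, o, s⟩, b), (⟨i, !o, s⟩, t)} + {(⟨j, o, -s⟩, b + 1), (⟨j, !o, -s⟩, t + 1)}) =
      0 := by
  rw [tagWrithe_add (by simp [hij]), tagWrithe_crossing, tagWrithe_crossing]
  simp only [add_left_inj]
  split_ifs <;> simp

theorem exists_parityTags_bigon (b b' : ZMod 2) (ord : Bool) (p q p' q' : Passage) :
    ∃ t, parityTags b [p, q] + parityTags b' (if ord then [q', p'] else [p', q']) =
      {(p, b), (p', t)} + {(q, b + 1), (q', t + 1)} := by
  refine ⟨if ord then b' + 1 else b', ?_⟩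
  cases ord <;>
    simp only [parityTags, Multiset.insert_eq_cons, ← Multiset.singleton_add, add_zero, ↓reduceIte,
      Bool.false_eq_true, CharTwo.add_cancel_right] <;>
    abel

theorem validK_bigon {i j : ℕ} (hij : i ≠ j) (o : Bool) {s : ℤ} (hs : s = 1 ∨ s = -1) :
    ValidK ([⟨i, o, s⟩, ⟨i, !o, s⟩] ++ [⟨j, o, -s⟩, ⟨j, !o, -s⟩]) :=
  (validK_append (by simp [hij])).2
    ⟨validK_crossing i o hs, validK_crossing j o (by omega)⟩

theorem sameOddWrithe_r2 {c c' : KCode} {i j : ℕ} {o ord : Bool} {s : ℤ} (hs : s = 1 ∨ s = -1)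
    (hij : i ≠ j) (hi : i ∉ crossIds c) (hj : j ∉ crossIds c)
    (h : ReplC c c'
      [([], [⟨i, o, s⟩, ⟨j, o, -s⟩]),
        ([], if ord then [⟨j, !o, -s⟩, ⟨i, !o, s⟩] else [⟨i, !o, s⟩, ⟨j, !o, -s⟩])] []) :
    SameOddWrithe c c' := by
  obtain ⟨r, T, hT, hc, hc'⟩ := h.exists_parityTags_eq (by cases ord <;> simp) 0
  obtain ⟨b, b', rfl⟩ : ∃ b b', T = [(b, [], [⟨i, o, s⟩, ⟨j, o, -s⟩]),
      (b', [], if ord then [⟨j, !o, -s⟩, ⟨i, !o, s⟩] else [⟨i, !o, s⟩, ⟨j, !o, -s⟩])] := by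
    simpa [List.map_eq_cons_iff] using hT
  obtain ⟨t, ht⟩ := exists_parityTags_bigon b b' ord ⟨i, o, s⟩ ⟨j, o, -s⟩ ⟨i, !o, s⟩ ⟨j, !o, -s⟩
  simp only [List.map_cons, List.map_nil, List.sum_cons, List.sum_nil, add_zero, zero_add, ht,
    parityTags.eq_1] at hc hc'
  refine sameOddWrithe_of_insert (by rw [hc', hc, add_comm]) rfl (validK_bigon hij o hs) ?_
    (tagWrithe_bigon hij o s b t)
  intro p hp q hq
  have hpi := forall_id_ne_iff.2 hi p hp
  have hpj := forall_id_ne_iff.2 hj p hp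
  simp only [List.cons_append, List.nil_append, List.mem_cons, List.not_mem_nil, or_false] at hq
  rcases hq with rfl | rfl | rfl | rfl <;> assumption

theorem coe_pairOf (t : Bool) (p q : Passage) : (pairOf t p q : Multiset Passage) = {p} + {q} := by
  cases t
  · exact Multiset.pair_comm q p
  · rfl

theorem parityTags_pairOf_not (b : ZMod 2) (t : Bool) (p q : Passage) :
    parityTags b (pairOf (!t) p q) = (parityTags b (pairOf t p q)).map (Prod.map id (· + 1)) := by
  cases t <;>
    simp only [pairOf, parityTags, Bool.not_true, Bool.not_false, ↓reduceIte, Bool.false_eq_true,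
      Multiset.map_cons, Multiset.map_zero, Prod.map_apply, id, CharTwo.add_cancel_right] <;>
    exact Multiset.cons_swap _ _ _

theorem sameOddWrithe_of_transpositions {c c' : KCode} {segs : List (KCode × KCode)}
    (h : ReplC c c' segs [])
    (htrans : ∀ s ∈ segs, ∃ t p q, s = (pairOf t p q, pairOf (!t) p q))
    (hvalid : ValidK (segs.flatMap Prod.fst)) : SameOddWrithe c c' := by
  have heven : ∀ s ∈ segs, Even s.1.length ∧ Even s.2.length := by
    intro s hs
    obtain ⟨t, p, q, rfl⟩ := htrans s hs
    cases t <;> simp [pairOf]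
  obtain ⟨r, T, rfl, hc, hc'⟩ := h.exists_parityTags_eq heven 0
  refine sameOddWrithe_of_shift hc ?_ ?_ hvalid
  · rw [hc', ← Multiset.coe_mapAddMonoidHom, map_list_sum, List.map_map]
    congr 2
    refine List.map_congr_left fun t ht => ?_
    obtain ⟨o, p, q, hs⟩ := htrans t.2 (List.mem_map_of_mem ht)
    simp only [hs, Function.comp_apply, parityTags_pairOf_not, Multiset.coe_mapAddMonoidHom]
  · clear hc hc' heven htrans hvalid h
    induction T with
    | nil => rfl
    | cons t T ih =>
      simp only [List.map_cons, List.sum_cons, Multiset.map_add, ih, map_fst_parityTags,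
        List.flatMap_cons, Multiset.coe_add]

theorem sameOddWrithe_r3 {c c' : KCode} {i j k : ℕ} {si sj sk : ℤ}
    (hsi : si = 1 ∨ si = -1) (hsj : sj = 1 ∨ sj = -1) (hsk : sk = 1 ∨ sk = -1)
    (hij : i ≠ j) (hik : i ≠ k) (hjk : j ≠ k) {t t' t'' : Bool} {segs : List (KCode × KCode)}
    (hsegs : segs.Perm
      [(pairOf t ⟨i, true, si⟩ ⟨j, true, sj⟩, pairOf (!t) ⟨i, true, si⟩ ⟨j, true, sj⟩),
        (pairOf t' ⟨i, false, si⟩ ⟨k, true, sk⟩, pairOf (!t') ⟨i, false, si⟩ ⟨k, true, sk⟩),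
        (pairOf t'' ⟨j, false, sj⟩ ⟨k, false, sk⟩, pairOf (!t'') ⟨j, false, sj⟩ ⟨k, false, sk⟩)])
    (h : ReplC c c' segs []) : SameOddWrithe c c' := by
  refine sameOddWrithe_of_transpositions h (fun s hs => ?_) ?_
  · have hs := hsegs.mem_iff.1 hs
    simp only [List.mem_cons, List.not_mem_nil, or_false] at hs
    rcases hs with rfl | rfl | rfl <;> exact ⟨_, _, _, rfl⟩
  · have hcrossings : (segs.flatMap Prod.fst).Perm
        ([⟨i, true, si⟩, ⟨i, false, si⟩] ++ ([⟨j, true, sj⟩, ⟨j, false, sj⟩] ++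
          [⟨k, true, sk⟩, ⟨k, false, sk⟩])) := by
      refine (hsegs.flatMap_right _).trans (Multiset.coe_eq_coe.1 ?_)
      simp only [List.flatMap_cons, List.flatMap_nil, ← Multiset.coe_add, coe_pairOf,
        ← Multiset.cons_coe, Multiset.coe_nil, ← Multiset.singleton_add]
      abel
    rw [validK_congr_of_perm hcrossings, validK_append (by simp [hij, hik]),
      validK_append (by simp [hjk])]
    exact ⟨validK_crossing i true hsi, validK_crossing j true hsj, validK_crossing k true hsk⟩

open Classical in
/-- The odd writhe as an invariant of links: defined for valid links with a single component. -/
noncomputable def knotOddWrithe : LLC → Option ℤ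
  | [(_, c)] => if ValidK c then some (oddWrithe c) else none
  | _ => none

theorem knotOddWrithe_singleton {c : KCode} (hc : ValidK c) (k : ℕ) :
    knotOddWrithe [(k, c)] = some (oddWrithe c) := if_pos hc

theorem knotOddWrithe_eq_none {L : LLC} (hL : L.length ≠ 1) : knotOddWrithe L = none := by
  rcases L with _ | ⟨_, _ | _⟩
  · rfl
  · exact absurd rfl hL
  · rfl

theorem SameOddWrithe.knotOddWrithe_eq {c c' : KCode} (h : SameOddWrithe c c') (k : ℕ) :
    knotOddWrithe [(k, c)] = knotOddWrithe [(k, c')] := by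
  by_cases hc : ValidK c
  · rw [knotOddWrithe_singleton hc, knotOddWrithe_singleton (h.1.1 hc), h.2 hc]
  · exact (if_neg hc).trans (if_neg (mt h.1.2 hc)).symm

theorem knotOddWrithe_eq_of_replL {L L' : LLC} {segs : List (KCode × KCode)} (h : ReplL L L' segs)
    (hsame : ∀ k c c', L = [(k, c)] → ReplC c c' segs [] → SameOddWrithe c c') :
    knotOddWrithe L = knotOddWrithe L' := by
  rcases h with _ | ⟨k, hc, _ | _⟩
  · rfl
  · exact (hsame k _ _ rfl hc).knotOddWrithe_eq k
  · rfl

theorem idsOf_singleton (k : ℕ) (c : KCode) : idsOf [(k, c)] = crossIds c := by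
  simp [idsOf, crossIdsL, plainL]

theorem MoveStep.knotOddWrithe_eq {L L' : LLC} (h : MoveStep L L') :
    knotOddWrithe L = knotOddWrithe L' := by
  cases h with
  | perm h =>
    by_cases hL : L.length = 1
    · obtain ⟨c, rfl⟩ := List.length_eq_one_iff.1 hL
      rw [List.singleton_perm.1 h]
    · rw [knotOddWrithe_eq_none hL, knotOddWrithe_eq_none (h.length_eq ▸ hL)]
  | rotate k x y M =>
    rcases M with _ | _
    · exact (sameOddWrithe_rotate x y).knotOddWrithe_eq k
    · rfl
  | rename f hf =>
    by_cases hL : L.length = 1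
    · obtain ⟨⟨k, c⟩, rfl⟩ := List.length_eq_one_iff.1 hL
      exact (sameOddWrithe_relabel hf c).knotOddWrithe_eq k
    · rw [knotOddWrithe_eq_none hL, knotOddWrithe_eq_none (by rwa [List.length_map])]
  | r1 i o s hs hi h =>
    refine knotOddWrithe_eq_of_replL h ?_
    rintro k c c' rfl hc
    exact sameOddWrithe_r1 hs (idsOf_singleton k c ▸ hi) hc
  | r2 i j o ord s hs hij hi hj h =>
    refine knotOddWrithe_eq_of_replL h ?_
    rintro k c c' rfl hc
    exact sameOddWrithe_r2 hs hij (idsOf_singleton k c ▸ hi) (idsOf_singleton k c ▸ hj) hc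
  | r3 i j k si sj sk hsi hsj hsk _ hij hik hjk t segs hsegs h =>
    exact knotOddWrithe_eq_of_replL h fun _ _ _ _ hc =>
      sameOddWrithe_r3 hsi hsj hsk hij hik hjk hsegs hc

theorem Isotopic.knotOddWrithe_eq {L L' : LLC} (h : Isotopic L L') :
    knotOddWrithe L = knotOddWrithe L' := by
  induction h with
  | rel _ _ h => exact h.knotOddWrithe_eq
  | refl _ => rfl
  | symm _ _ _ ih => exact ih.symm
  | trans _ _ _ _ _ ih₁ ih₂ => exact ih₁.trans ih₂

theorem Isotopic.oddWrithe_eq {a b : KCode} {j k : ℕ} (h : Isotopic [(j, a)] [(k, b)])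
    (ha : ValidK a) : oddWrithe a = oddWrithe b := by
  have hsome := (knotOddWrithe_singleton ha j).symm.trans h.knotOddWrithe_eq
  by_cases hb : ValidK b
  · rwa [knotOddWrithe_singleton hb, Option.some.injEq] at hsome
  · simp [knotOddWrithe, hb] at hsome

/-- For any virtual knot diagram `K`, the odd writhe
satisfies `J(K*) = -J(K)`, where `K*` is the mirror image of `K` (obtained by
switching all classical crossings); consequently, if `J(K)` is nonzero then
`K` is not equivalent to any classical knot and `K` is not equivalent to its
mirror image (`K` is chiral). -/
theorem odd_writhe_mirror_chirality (a : KCode) (ha : ValidK a) :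
    oddWrithe (switchAll a) = - oddWrithe a ∧
    (oddWrithe a ≠ 0 →
      (∀ b : KCode, ValidK b → IsClassical b → ¬ Isotopic [(0, a)] [(0, b)]) ∧
      ¬ Isotopic [(0, a)] [(0, switchAll a)]) := by
  refine ⟨oddWrithe_switchAll a, fun hJ => ⟨fun b hb hclassical hiso => hJ ?_, fun hiso => hJ ?_⟩⟩
  · rw [hiso.oddWrithe_eq ha, oddWrithe_eq_zero_of_isClassical hb hclassical]
  · have hneg : oddWrithe a = -oddWrithe a := (hiso.oddWrithe_eq ha).trans (oddWrithe_switchAll a)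
    omega
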